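/- Let d ≥ 1, β ∈ (0,2), and let f : ℝ^d → ℝ be smooth with suitable decay. Suppose Γ : [0,∞) → [0,∞) is a C² convex nondecreasing function with Γ(0) = 0. Then pointwise Λ^β(Γ ∘ f²)(x) ≤ Γ′(f(x)²) · Λ^β(f²)(x) whenever f² takes values in [0,∞), where Λ^β is the fractional Laplacian defined by the principal value integral Λ^β g(x) = c_{d,β} P.V. ∫_{ℝ^d} (g(x) − g(y)) / |x−y|^{d+β} dy with c_{d,β} > 0. -/

import Mathlib

open MeasureTheory Filter SchwartzMap

/-- Integrability of the radial dominating function. -/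
theorem radial_integrable (d : ℕ) (hd : 1 ≤ d) (β : ℝ) (hβ : 0 < β) (hβ2 : β < 2)
    (r A B : ℝ) (hr : 0 < r) :
    Integrable (fun z : EuclideanSpace ℝ (Fin d) =>
      (if ‖z‖ < r then A * ‖z‖ ^ 2 else B) / ‖z‖ ^ ((d : ℝ) + β)) := by
  have : Nonempty (Fin d) := ⟨⟨0, hd⟩⟩
  have key := integrable_fun_norm_addHaar (volume : Measure (EuclideanSpace ℝ (Fin d)))
    (f := fun t : ℝ => (if t < r then A * t ^ 2 else B) / t ^ ((d : ℝ) + β))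
  refine key.2 ?_
  have hU : Set.Ioi (0:ℝ) = Set.Ioo 0 r ∪ Set.Ici r := (Set.Ioo_union_Ici_eq_Ioi hr).symm
  have hpow : ∀ t : ℝ, 0 < t → t ^ (d - 1) = t ^ ((d : ℝ) - 1) := by
    intro t ht
    rw [← Real.rpow_natCast, Nat.cast_sub hd, Nat.cast_one]
  rw [hU, integrableOn_union]
  constructor
  · have h1 : IntegrableOn (fun t : ℝ => A * t ^ (1 - β)) (Set.Ioo 0 r) :=
      ((intervalIntegral.integrableOn_Ioo_rpow_iff hr).2 (by linarith)).const_mul A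
    refine h1.congr_fun (fun t ht => ?_) measurableSet_Ioo
    have ht0 : 0 < t := ht.1
    simp only [finrank_euclideanSpace, Fintype.card_fin, smul_eq_mul, if_pos ht.2]
    rw [hpow t ht0, div_eq_mul_inv, ← Real.rpow_neg ht0.le, ← Real.rpow_two]
    rw [show t ^ ((d:ℝ) - 1) * (A * t ^ (2:ℝ) * t ^ (-((d:ℝ) + β)))
      = A * (t ^ ((d:ℝ) - 1) * t ^ (2:ℝ) * t ^ (-((d:ℝ) + β))) by ring,
      ← Real.rpow_add ht0, ← Real.rpow_add ht0]
    congr 2; ring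
  · rw [integrableOn_Ici_iff_integrableOn_Ioi]
    have h1 : IntegrableOn (fun t : ℝ => B * t ^ (-1 - β)) (Set.Ioi r) :=
      (integrableOn_Ioi_rpow_of_lt (by linarith) hr).const_mul B
    refine h1.congr_fun (fun t ht => ?_) measurableSet_Ioi
    have ht' : r < t := ht
    have ht0 : 0 < t := hr.trans ht
    simp only [finrank_euclideanSpace, Fintype.card_fin, smul_eq_mul, if_neg (not_lt.2 ht'.le)]
    rw [hpow t ht0, div_eq_mul_inv, ← Real.rpow_neg ht0.le]
    rw [show t ^ ((d:ℝ) - 1) * (B * t ^ (-((d:ℝ) + β)))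
      = B * (t ^ ((d:ℝ) - 1) * t ^ (-((d:ℝ) + β))) by ring, ← Real.rpow_add ht0]
    congr 2; ring

/-- Second difference estimate for `C²` functions. -/
theorem second_diff (d : ℕ) (g : EuclideanSpace ℝ (Fin d) → ℝ) (hg : ContDiff ℝ 2 g)
    (x : EuclideanSpace ℝ (Fin d)) :
    ∃ r A : ℝ, 0 < r ∧ ∀ z, ‖z‖ < r → |2 * g x - g (x + z) - g (x - z)| ≤ A * ‖z‖ ^ 2 := by
  have h1 : ContDiff ℝ 1 (fderiv ℝ g) := hg.fderiv_right (by norm_num)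
  obtain ⟨K, t, ht, hK⟩ := (h1.contDiffAt (x := x)).exists_lipschitzOnWith
  obtain ⟨r, hr, hrt⟩ := Metric.mem_nhds_iff.1 ht
  refine ⟨r, K * 2, hr, fun z hz => ?_⟩
  have hdiff : Differentiable ℝ g := hg.differentiable (by norm_num)
  have hder : ∀ w : EuclideanSpace ℝ (Fin d),
      HasFDerivAt (fun w => g (x + w) + g (x - w)) (fderiv ℝ g (x + w) - fderiv ℝ g (x - w)) w := by
    intro w
    have a1 : HasFDerivAt (fun w => g (x + w)) (fderiv ℝ g (x + w)) w := by
      have := (hdiff (x + w)).hasFDerivAt.comp w ((hasFDerivAt_id w).const_add x)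
      refine this.congr_fderiv ?_
      ext v; simp
    have a2 : HasFDerivAt (fun w => g (x - w)) (-fderiv ℝ g (x - w)) w := by
      have := (hdiff (x - w)).hasFDerivAt.comp w ((hasFDerivAt_id w).const_sub x)
      refine this.congr_fderiv ?_
      ext v; simp
    refine (a1.add a2).congr_fderiv ?_
    exact (sub_eq_add_neg _ _).symm
  have hmv := Convex.norm_image_sub_le_of_norm_hasFDerivWithin_le (𝕜 := ℝ)
    (f := fun w => g (x + w) + g (x - w)) (C := K * 2 * ‖z‖)
    (s := Metric.closedBall (0 : EuclideanSpace ℝ (Fin d)) ‖z‖)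
    (x := 0) (y := z)
    (fun w _ => (hder w).hasFDerivWithinAt) (fun w hw => ?_) (convex_closedBall _ _)
    (by simp) (by simp)
  · simp only [add_zero, sub_zero, Real.norm_eq_abs] at hmv
    rw [← abs_neg]
    calc _ = |g (x + z) + g (x - z) - (g x + g x)| := by congr 1; ring
      _ ≤ _ := hmv
      _ = _ := by ring
  · have hw' : ‖w‖ ≤ ‖z‖ := by simpa using hw
    have := hK.norm_sub_le (x := x + w) (y := x - w) (hrt (by simpa using hw'.trans_lt hz))
      (hrt (by simpa [dist_eq_norm] using hw'.trans_lt hz))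
    refine this.trans ?_
    have e : x + w - (x - w) = (2:ℝ) • w := by rw [two_smul]; abel
    rw [e, norm_smul, mul_assoc]
    norm_num
    gcongr

/-- The truncated integrand is integrable. -/
theorem tail_integrable (d : ℕ) (hd : 1 ≤ d) (β : ℝ) (hβ : 0 < β) (hβ2 : β < 2)
    (g : EuclideanSpace ℝ (Fin d) → ℝ) (hg : Continuous g) (M : ℝ) (hM : ∀ y, |g y| ≤ M)
    (x : EuclideanSpace ℝ (Fin d)) (ε : ℝ) (hε : 0 < ε) :
    IntegrableOn (fun y => (g x - g y) / dist x y ^ ((d : ℝ) + β))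
      {y : EuclideanSpace ℝ (Fin d) | ε < dist x y} := by
  have hms : MeasurableSet {y : EuclideanSpace ℝ (Fin d) | ε < dist x y} :=
    measurableSet_lt measurable_const (by fun_prop)
  have hb := (radial_integrable d hd β hβ hβ2 ε 0 (2 * M) hε).comp_sub_left x
  refine (hb.integrableOn (s := {y | ε < dist x y})).mono' ?_ ?_
  · apply Measurable.aestronglyMeasurable
    have := hg.measurable
    fun_prop
  · refine (ae_restrict_iff' hms).2 (Eventually.of_forall fun y hy => ?_)
    have hy' : ε < ‖x - y‖ := by simpa [dist_eq_norm] using hy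
    rw [dist_eq_norm, if_neg (not_lt.2 hy'.le), norm_div, Real.norm_eq_abs, Real.norm_eq_abs,
      abs_of_nonneg (Real.rpow_nonneg (norm_nonneg _) _)]
    gcongr
    have := abs_sub (g x) (g y)
    linarith [hM x, hM y]

/-- Existence of the principal value. -/
theorem pv_exists (d : ℕ) (hd : 1 ≤ d) (β : ℝ) (hβ : 0 < β) (hβ2 : β < 2)
    (g : EuclideanSpace ℝ (Fin d) → ℝ) (hg : ContDiff ℝ 2 g) (M : ℝ) (hM : ∀ y, |g y| ≤ M)
    (x : EuclideanSpace ℝ (Fin d)) :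
    ∃ L : ℝ, Tendsto (fun ε : ℝ => ∫ y in {y : EuclideanSpace ℝ (Fin d) | ε < dist x y},
            (g x - g y) / dist x y ^ ((d : ℝ) + β)) (nhdsWithin 0 (Set.Ioi 0)) (nhds L) := by
  obtain ⟨r, A, hr, hA⟩ := second_diff d g hg x
  have hgm : Measurable g := hg.continuous.measurable
  set s : ℝ := (d : ℝ) + β with hs
  set D : EuclideanSpace ℝ (Fin d) → ℝ :=
    fun z => (2 * g x - g (x + z) - g (x - z)) / ‖z‖ ^ s with hD
  have hDm : Measurable D := by fun_prop
  have hmz : ∀ ε : ℝ, MeasurableSet {z : EuclideanSpace ℝ (Fin d) | ε < ‖z‖} := fun ε =>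
    measurableSet_lt measurable_const (by fun_prop)
  have hbound : ∀ z, ‖D z‖ ≤ (if ‖z‖ < r then A * ‖z‖ ^ 2 else 4 * M) / ‖z‖ ^ s := by
    intro z
    rw [hD]
    simp only
    rw [norm_div, Real.norm_eq_abs, Real.norm_eq_abs,
      abs_of_nonneg (Real.rpow_nonneg (norm_nonneg _) _)]
    gcongr
    split_ifs with h
    · exact hA z h
    · have a := abs_le.1 (hM x)
      have b := abs_le.1 (hM (x + z))
      have c := abs_le.1 (hM (x - z))
      rw [abs_le]; constructor <;> linarith
  have heq : ∀ ε : ℝ, 0 < ε → (∫ y in {y : EuclideanSpace ℝ (Fin d) | ε < dist x y},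
      (g x - g y) / dist x y ^ s)
      = (1/2) * ∫ z, {z : EuclideanSpace ℝ (Fin d) | ε < ‖z‖}.indicator D z := by
    intro ε hε
    have hms : MeasurableSet {y : EuclideanSpace ℝ (Fin d) | ε < dist x y} :=
      measurableSet_lt measurable_const (by fun_prop)
    have hint := tail_integrable d hd β hβ hβ2 g hg.continuous M hM x ε hε
    rw [← integrable_indicator_iff hms] at hint
    rw [← integral_indicator hms]
    set u := {y : EuclideanSpace ℝ (Fin d) | ε < dist x y}.indicator
      (fun y => (g x - g y) / dist x y ^ s) with hu
    have e1 : ∫ z, u (x + z) = ∫ y, u y := integral_add_left_eq_self u x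
    have e2 : ∫ z, u (x - z) = ∫ y, u y := integral_sub_left_eq_self u volume x
    have e3 : ∫ z, (u (x + z) + u (x - z)) = (∫ z, u (x + z)) + ∫ z, u (x - z) :=
      integral_add (hint.comp_add_left x) (hint.comp_sub_left x)
    have e4 : ∀ z, {z : EuclideanSpace ℝ (Fin d) | ε < ‖z‖}.indicator D z
        = u (x + z) + u (x - z) := by
      intro z
      by_cases h : ε < ‖z‖
      · simp only [hu, hD, Set.indicator, Set.mem_ofPred_eq, dist_self_add_right, dist_self_sub_right,
          h, if_true]
        ring
      · simp [hu, hD, Set.indicator, h]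
    simp_rw [e4]
    rw [e3, e1, e2]; ring
  refine ⟨(1/2) * ∫ z, D z, ?_⟩
  have hlim : Tendsto (fun ε : ℝ => ∫ z, {z : EuclideanSpace ℝ (Fin d) | ε < ‖z‖}.indicator D z)
      (nhdsWithin 0 (Set.Ioi 0)) (nhds (∫ z, D z)) := by
    refine tendsto_integral_filter_of_dominated_convergence _
      (Eventually.of_forall fun ε => (hDm.indicator (hmz ε)).aestronglyMeasurable)
      (Eventually.of_forall fun ε => Eventually.of_forall fun z =>
        (norm_indicator_le_norm_self D z).trans (hbound z))
      (radial_integrable d hd β hβ hβ2 r A (4 * M) hr) (Eventually.of_forall fun z => ?_)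
    refine tendsto_const_nhds.congr' ?_
    by_cases hz : z = 0
    · refine Eventually.of_forall fun ε => ?_
      have : D z = 0 := by rw [hD, hz]; simp; left; ring
      simp [Set.indicator, this]
    · have : Set.Iio ‖z‖ ∈ nhdsWithin (0:ℝ) (Set.Ioi 0) :=
        nhdsWithin_le_nhds (Iio_mem_nhds (norm_pos_iff.2 hz))
      filter_upwards [this] with ε hε
      have hε' : ε < ‖z‖ := hε
      simp [Set.indicator, hε']
  refine (hlim.const_mul (1/2)).congr' ?_
  filter_upwards [self_mem_nhdsWithin] with ε hε
  exact (heq ε hε).symm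

/-- Córdoba–Córdoba convexity inequality for the fractional Laplacian
`Λ^β g(x) = c P.V. ∫ (g(x) − g(y))/|x−y|^{d+β} dy`: for Schwartz `f`, `h = f²`, and a `C²`
convex nondecreasing `Γ : [0,∞) → [0,∞)` with `Γ(0) = 0`, the principal values
`Λ^β h(x)` and `Λ^β (Γ∘h)(x)` exist and `Λ^β(Γ∘h)(x) ≤ Γ′(h(x)) Λ^β h(x)` pointwise. -/
theorem cordoba_cordoba (d : ℕ) (hd : 1 ≤ d) (β : ℝ) (hβ : 0 < β) (hβ2 : β < 2)
    (c : ℝ) (hc : 0 < c)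
    (f : 𝓢(EuclideanSpace ℝ (Fin d), ℝ))
    (Γ : ℝ → ℝ) (hΓsm : ContDiff ℝ 2 Γ) (hΓ0 : Γ 0 = 0)
    (hΓconv : ConvexOn ℝ (Set.Ici 0) Γ) (hΓmono : MonotoneOn Γ (Set.Ici 0))
    (hΓnn : ∀ t : ℝ, 0 ≤ t → 0 ≤ Γ t)
    (x : EuclideanSpace ℝ (Fin d)) :
    ∃ Lh LΓ : ℝ,
      Tendsto (fun ε : ℝ =>
          c * ∫ y in {y : EuclideanSpace ℝ (Fin d) | ε < dist x y},
            ((f x) ^ 2 - (f y) ^ 2) / dist x y ^ ((d : ℝ) + β))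
        (nhdsWithin 0 (Set.Ioi 0)) (nhds Lh) ∧
      Tendsto (fun ε : ℝ =>
          c * ∫ y in {y : EuclideanSpace ℝ (Fin d) | ε < dist x y},
            (Γ ((f x) ^ 2) - Γ ((f y) ^ 2)) / dist x y ^ ((d : ℝ) + β))
        (nhdsWithin 0 (Set.Ioi 0)) (nhds LΓ) ∧
      LΓ ≤ deriv Γ ((f x) ^ 2) * Lh := by
  obtain ⟨N, hN⟩ : ∃ N : ℝ, ∀ y, ‖f y‖ ≤ N := ⟨_, SchwartzMap.norm_le_seminorm ℝ f⟩
  have hsq : ∀ y, (f y) ^ 2 ≤ N ^ 2 := fun y => by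
    rw [← sq_abs]
    exact pow_le_pow_left₀ (abs_nonneg _) (hN y) 2
  have hh : ContDiff ℝ 2 (fun y => (f y) ^ 2) := (f.smooth 2).pow 2
  have hG : ContDiff ℝ 2 (fun y => Γ ((f y) ^ 2)) := hΓsm.comp hh
  have hhM : ∀ y, |(f y) ^ 2| ≤ N ^ 2 := fun y => by
    rw [abs_of_nonneg (sq_nonneg _)]; exact hsq y
  have hGM : ∀ y, |Γ ((f y) ^ 2)| ≤ Γ (N ^ 2) := fun y => by
    rw [abs_of_nonneg (hΓnn _ (sq_nonneg _))]
    exact hΓmono (Set.mem_Ici.2 (sq_nonneg _)) (Set.mem_Ici.2 (sq_nonneg _)) (hsq y)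
  obtain ⟨L1, hL1⟩ := pv_exists d hd β hβ hβ2 _ hh _ hhM x
  obtain ⟨L2, hL2⟩ := pv_exists d hd β hβ hβ2 _ hG _ hGM x
  refine ⟨c * L1, c * L2, hL1.const_mul c, hL2.const_mul c, ?_⟩
  have htan : ∀ a b : ℝ, 0 ≤ a → 0 ≤ b → Γ a - Γ b ≤ deriv Γ a * (a - b) := by
    intro a b ha hb
    have hda : HasDerivAt Γ (deriv Γ a) a :=
      (hΓsm.differentiable (by norm_num) a).hasDerivAt
    rcases lt_trichotomy a b with h | h | h
    · have := hΓconv.le_slope_of_hasDerivAt ha hb h hda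
      rw [slope_def_field, le_div_iff₀ (by linarith)] at this
      linarith
    · simp [h]
    · have := hΓconv.slope_le_of_hasDerivAt hb ha h hda
      rw [slope_def_field, div_le_iff₀ (by linarith)] at this
      linarith
  have hle : L2 ≤ deriv Γ ((f x) ^ 2) * L1 := by
    refine le_of_tendsto_of_tendsto hL2 (hL1.const_mul _) ?_
    filter_upwards [self_mem_nhdsWithin] with ε hε
    rw [← integral_const_mul]
    refine integral_mono (tail_integrable d hd β hβ hβ2 _ hG.continuous _ hGM x ε hε)
      ((tail_integrable d hd β hβ hβ2 _ hh.continuous _ hhM x ε hε).const_mul _) fun y => ?_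
    simp only
    rw [← mul_div_assoc]
    exact div_le_div_of_nonneg_right (htan _ _ (sq_nonneg _) (sq_nonneg _))
      (Real.rpow_nonneg dist_nonneg _)
  calc c * L2 ≤ c * (deriv Γ ((f x) ^ 2) * L1) := mul_le_mul_of_nonneg_left hle hc.le
    _ = _ := by ring
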